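/- A symmetric matrix over ℤ₂ is uniquely determined up to congruence by its rank together with the boolean invariant diag(A) (whether A has any non-zero diagonal entry). In particular: if all diagonal entries of A vanish, the rank of A is even and A is congruent to a direct sum of rank(A)/2 copies of [[0,1],[1,0]] and a zero block; if some diagonal entry is non-zero, A is congruent to I_r ⊕ 0 with r = rank(A). -/

import Mathlib

open Matrix

namespace Matrix

section Congruent

variable {l m n p R : Type*} [Fintype l] [Fintype m] [Fintype n] [Fintype p]
  [DecidableEq l] [DecidableEq m] [DecidableEq n] [DecidableEq p] [CommRing R]

/-- Congruence of square matrices, possibly indexed by different types. -/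
def Congruent (A : Matrix m m R) (B : Matrix n n R) : Prop :=
  ∃ (P : Matrix m n R) (Q : Matrix n m R), P * Q = 1 ∧ Q * P = 1 ∧ A = P * B * Pᵀ

theorem Congruent.refl (A : Matrix m m R) : Congruent A A :=
  ⟨1, 1, by simp, by simp, by simp⟩

theorem Congruent.symm {A : Matrix m m R} {B : Matrix n n R} (h : Congruent A B) :
    Congruent B A := by
  obtain ⟨P, Q, hPQ, hQP, rfl⟩ := h
  refine ⟨Q, P, hQP, hPQ, ?_⟩
  calc B = (Q * P) * B * (Q * P)ᵀ := by simp [hQP]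
    _ = Q * (P * B * Pᵀ) * Qᵀ := by simp only [transpose_mul, Matrix.mul_assoc]

theorem Congruent.trans {A : Matrix m m R} {B : Matrix n n R} {C : Matrix p p R}
    (h₁ : Congruent A B) (h₂ : Congruent B C) : Congruent A C := by
  obtain ⟨P, Q, hPQ, hQP, rfl⟩ := h₁
  obtain ⟨P', Q', hPQ', hQP', rfl⟩ := h₂
  refine ⟨P * P', Q' * Q, ?_, ?_, by simp only [transpose_mul, Matrix.mul_assoc]⟩
  · rw [Matrix.mul_assoc, ← Matrix.mul_assoc P', hPQ', Matrix.one_mul, hPQ]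
  · rw [Matrix.mul_assoc, ← Matrix.mul_assoc Q, hQP, Matrix.one_mul, hQP']

theorem congruent_submatrix (A : Matrix m m R) (e : n ≃ m) :
    Congruent A (A.submatrix e e) := by
  refine ⟨(1 : Matrix m m R).submatrix id e, (1 : Matrix m m R).submatrix e id, ?_, ?_, ?_⟩
  · rw [submatrix_mul_equiv]; simp
  · rw [← submatrix_mul _ _ e id e Function.bijective_id]; simp
  · rw [submatrix_mul_equiv, transpose_submatrix, submatrix_mul_equiv]; simp

theorem Congruent.fromBlocks {A : Matrix m m R} {B : Matrix n n R} {A' : Matrix l l R}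
    {B' : Matrix p p R} (h : Congruent A B) (h' : Congruent A' B') :
    Congruent (fromBlocks A 0 0 A') (fromBlocks B 0 0 B') := by
  obtain ⟨P, Q, hPQ, hQP, rfl⟩ := h
  obtain ⟨P', Q', hPQ', hQP', rfl⟩ := h'
  exact ⟨Matrix.fromBlocks P 0 0 P', Matrix.fromBlocks Q 0 0 Q',
    by simp [fromBlocks_multiply, hPQ, hPQ'], by simp [fromBlocks_multiply, hQP, hQP'],
    by simp [fromBlocks_multiply, fromBlocks_transpose]⟩

theorem congruent_fromBlocks_assoc (A : Matrix l l R) (B : Matrix m m R) (C : Matrix n n R) :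
    Congruent (Matrix.fromBlocks A 0 0 (Matrix.fromBlocks B 0 0 C))
      (Matrix.fromBlocks (Matrix.fromBlocks A 0 0 B) 0 0 C) := by
  convert congruent_submatrix _ (Equiv.sumAssoc l m n) using 1
  ext ((i | i) | i) ((j | j) | j) <;> rfl

theorem Congruent.isSymm {A : Matrix m m R} {B : Matrix n n R} (h : Congruent A B)
    (hB : B.IsSymm) : A.IsSymm := by
  obtain ⟨P, Q, -, -, rfl⟩ := h
  simp [IsSymm, transpose_mul, hB.eq, Matrix.mul_assoc]

theorem Congruent.rank_le [StrongRankCondition R] {A : Matrix m m R} {B : Matrix n n R}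
    (h : Congruent A B) : A.rank ≤ B.rank := by
  obtain ⟨P, Q, -, -, rfl⟩ := h
  exact (rank_mul_le_left _ _).trans (rank_mul_le_right _ _)

theorem Congruent.rank_eq [StrongRankCondition R] {A : Matrix m m R} {B : Matrix n n R}
    (h : Congruent A B) : A.rank = B.rank :=
  h.rank_le.antisymm h.symm.rank_le

/-- Congruence preserves alternating matrices in characteristic two. -/
theorem Congruent.diag_eq_zero [CharP R 2] {A : Matrix m m R} {B : Matrix n n R}
    (h : Congruent A B) (hB : B.IsSymm) (hB₀ : ∀ i, B i i = 0) (i : m) : A i i = 0 := by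
  obtain ⟨P, Q, -, -, rfl⟩ := h
  have hsum : (P * B * Pᵀ) i i = ∑ x : n × n, P i x.1 * B x.1 x.2 * P i x.2 := by
    simp only [mul_apply, transpose_apply, Finset.sum_mul, Fintype.sum_prod_type]
    exact Finset.sum_comm
  rw [hsum]
  refine Finset.sum_involution (fun x _ => x.swap) ?_ ?_ (by simp) (by simp)
  · rintro ⟨a, b⟩ -
    simp only [Prod.swap, hB.apply a b]
    rw [show P i b * B a b * P i a = P i a * B a b * P i b by ring]
    exact CharTwo.add_self_eq_zero _
  · rintro ⟨a, b⟩ - hne heq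
    obtain rfl : b = a := congrArg Prod.fst heq
    simp [hB₀] at hne

/-- Splitting off an invertible principal submatrix of a symmetric matrix. -/
theorem congruent_fromBlocks_schur (A : Matrix m m R) (C : Matrix n m R) (D : Matrix n n R)
    [Invertible A] (hA : A.IsSymm) :
    Congruent (Matrix.fromBlocks A Cᵀ C D)
      (Matrix.fromBlocks A 0 0 (D - C * ⅟A * Cᵀ)) := by
  refine ⟨Matrix.fromBlocks 1 0 (C * ⅟A) 1, Matrix.fromBlocks 1 0 (-(C * ⅟A)) 1,
    by simp [fromBlocks_multiply], by simp [fromBlocks_multiply], ?_⟩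
  have hinv : (⅟A)ᵀ = ⅟A := by
    rw [invOf_eq_nonsing_inv, transpose_nonsing_inv, hA.eq]
  rw [fromBlocks_eq_of_invertible₁₁]
  simp only [fromBlocks_transpose, transpose_mul, transpose_one, transpose_zero, hinv]

end Congruent

theorem exists_congruent_fromBlocks {R : Type*} [CommRing R] {k n : ℕ}
    {A : Matrix (Fin n) (Fin n) R} (hA : A.IsSymm) {f : Fin k → Fin n}
    (hf : Function.Injective f) (hu : IsUnit (A.submatrix f f)) :
    ∃ (m : ℕ) (S : Matrix (Fin m) (Fin m) R), k + m = n ∧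
      Congruent A (fromBlocks (A.submatrix f f) 0 0 S) := by
  classical
  let g := (Equiv.sumCongr (Equiv.ofInjective f hf)
    (Fintype.equivFin ↥(Set.range f)ᶜ).symm).trans (Equiv.Set.sumCompl (Set.range f))
  refine ⟨_, A.submatrix (g ∘ Sum.inr) (g ∘ Sum.inr) - A.submatrix (g ∘ Sum.inr) f *
    (A.submatrix f f)⁻¹ * (A.submatrix (g ∘ Sum.inr) f)ᵀ, ?_, ?_⟩
  · simpa using Fintype.card_congr g
  · have := hu.invertible
    refine (congruent_submatrix A g).trans ?_
    rw [← invOf_eq_nonsing_inv]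
    convert congruent_fromBlocks_schur (A.submatrix f f) (A.submatrix (g ∘ Sum.inr) f)
      (A.submatrix (g ∘ Sum.inr) (g ∘ Sum.inr)) (hA.submatrix f) using 1
    ext (i | i) (j | j)
    · rfl
    · exact hA.apply _ _
    · rfl
    · rfl

section NormalForms

/-- The matrix `I_r ⊕ 0` of size `n`. -/
def partialIdentity (n r : ℕ) : Matrix (Fin n) (Fin n) (ZMod 2) :=
  of fun i j => if i = j ∧ i.val < r then 1 else 0

/-- The direct sum of `r / 2` hyperbolic planes and a zero block, of size `n`. -/
def hyperbolicSum (n r : ℕ) : Matrix (Fin n) (Fin n) (ZMod 2) :=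
  of fun i j => if i.val < r ∧ j.val < r ∧ i.val / 2 = j.val / 2 ∧ i ≠ j then 1 else 0

/-- The hyperbolic plane. -/
def hyperbolicPlane : Matrix (Fin 2) (Fin 2) (ZMod 2) := !![0, 1; 1, 0]

theorem congruent_partialIdentity_add (k m r : ℕ) :
    Congruent (fromBlocks (1 : Matrix (Fin k) (Fin k) (ZMod 2)) 0 0 (partialIdentity m r))
      (partialIdentity (k + m) (k + r)) := by
  refine Congruent.symm ?_
  convert congruent_submatrix _ finSumFinEquiv using 1
  ext (i | i) (j | j) <;>
    simp [partialIdentity, one_apply, Fin.ext_iff] <;> grind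

theorem congruent_hyperbolicSum_add (m r : ℕ) :
    Congruent (fromBlocks hyperbolicPlane 0 0 (hyperbolicSum m r))
      (hyperbolicSum (2 + m) (2 + r)) := by
  refine Congruent.symm ?_
  convert congruent_submatrix _ finSumFinEquiv using 1
  ext (i | i) (j | j)
  · fin_cases i <;> fin_cases j <;> simp [hyperbolicSum, hyperbolicPlane] <;> omega
  all_goals
    simp [hyperbolicSum, Fin.ext_iff] <;> grind

theorem partialIdentity_eq_diagonal (n r : ℕ) :
    partialIdentity n r = diagonal fun i : Fin n => if i.val < r then 1 else 0 := by
  ext i j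
  simp only [partialIdentity, of_apply, diagonal_apply]
  split_ifs <;> tauto

theorem rank_partialIdentity {n r : ℕ} (hr : r ≤ n) : (partialIdentity n r).rank = r := by
  rw [partialIdentity_eq_diagonal, rank_diagonal, Fintype.card_subtype]
  simp [Fin.card_filter_val_lt, hr]

theorem hyperbolicSum_mul_self {n r : ℕ} (hr : r ≤ n) (he : Even r) :
    hyperbolicSum n r * hyperbolicSum n r = partialIdentity n r := by
  ext i j
  rw [mul_apply]
  by_cases hi : i.val < r
  · have hlt : 2 * (i.val / 2) + (1 - i.val % 2) < r := by grind
    rw [Finset.sum_eq_single (⟨2 * (i.val / 2) + (1 - i.val % 2), by omega⟩ : Fin n)]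
    · simp [hyperbolicSum, partialIdentity, Fin.ext_iff]
      grind
    · intro b _ hb
      simp [hyperbolicSum, Fin.ext_iff] at hb ⊢
      grind
    · simp
  · simp [hyperbolicSum, partialIdentity, hi]

theorem rank_hyperbolicSum {n r : ℕ} (hr : r ≤ n) (he : Even r) :
    (hyperbolicSum n r).rank = r := by
  have hmul : partialIdentity n r * hyperbolicSum n r = hyperbolicSum n r := by
    ext i j
    rw [partialIdentity_eq_diagonal, diagonal_mul]
    simp only [hyperbolicSum, of_apply]
    split_ifs <;> simp_all
  apply le_antisymm
  · calc (hyperbolicSum n r).rank = (partialIdentity n r * hyperbolicSum n r).rank := by rw [hmul]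
      _ ≤ (partialIdentity n r).rank := rank_mul_le_left _ _
      _ = r := rank_partialIdentity hr
  · calc r = (hyperbolicSum n r * hyperbolicSum n r).rank := by
          rw [hyperbolicSum_mul_self hr he, rank_partialIdentity hr]
      _ ≤ _ := rank_mul_le_left _ _

/-- A line of norm one absorbs a hyperbolic plane. -/
theorem congruent_one_hyperbolicPlane :
    Congruent (fromBlocks (1 : Matrix (Fin 1) (Fin 1) (ZMod 2)) 0 0 hyperbolicPlane)
      (fromBlocks (1 : Matrix (Fin 2) (Fin 2) (ZMod 2)) 0 0
        (1 : Matrix (Fin 1) (Fin 1) (ZMod 2))) :=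
  ⟨fromBlocks !![1, 1] !![1] !![1, 1; 0, 1] !![0; 1],
    fromBlocks !![1; 1] !![0, 1; 1, 1] !![1] !![1, 0],
    by decide, by decide, by decide⟩

end NormalForms

theorem exists_congruent_hyperbolicPlane {n : ℕ} {A : Matrix (Fin n) (Fin n) (ZMod 2)}
    (hA : A.IsSymm) (hA₀ : ∀ i, A i i = 0) (hne : A ≠ 0) :
    ∃ (m : ℕ) (S : Matrix (Fin m) (Fin m) (ZMod 2)), 2 + m = n ∧ S.IsSymm ∧
      (∀ i, S i i = 0) ∧ Congruent A (fromBlocks hyperbolicPlane 0 0 S) := by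
  obtain ⟨i, j, hij⟩ : ∃ i j, A i j ≠ 0 := by
    by_contra! h
    exact hne (ext h)
  have hij₁ : A i j = 1 := Fin.eq_one_of_ne_zero _ hij
  have hne' : i ≠ j := by rintro rfl; exact hij (hA₀ i)
  have hsub : A.submatrix ![i, j] ![i, j] = hyperbolicPlane := by
    ext a b
    fin_cases a <;> fin_cases b <;> simp [hyperbolicPlane, hA₀, hij₁, hA.apply i j]
  have hu : IsUnit hyperbolicPlane := IsUnit.of_mul_eq_one hyperbolicPlane (by decide)
  obtain ⟨m, S, hm, hS⟩ := exists_congruent_fromBlocks hA (f := ![i, j])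
    (by intro a b; fin_cases a <;> fin_cases b <;> simp [hne', hne'.symm]) (hsub ▸ hu)
  rw [hsub] at hS
  refine ⟨m, S, hm, (isSymm_fromBlocks_iff.mp (hS.symm.isSymm hA)).2.2.2, fun k => ?_, hS⟩
  exact hS.symm.diag_eq_zero hA hA₀ (Sum.inr k)

theorem exists_congruent_one {n : ℕ} {A : Matrix (Fin n) (Fin n) (ZMod 2)}
    (hA : A.IsSymm) (hA₁ : ∃ i, A i i ≠ 0) :
    ∃ (m : ℕ) (S : Matrix (Fin m) (Fin m) (ZMod 2)), 1 + m = n ∧ S.IsSymm ∧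
      Congruent A (fromBlocks (1 : Matrix (Fin 1) (Fin 1) (ZMod 2)) 0 0 S) := by
  obtain ⟨i, hi⟩ := hA₁
  have hsub : A.submatrix ![i] ![i] = 1 := by
    ext a b
    fin_cases a; fin_cases b
    exact Fin.eq_one_of_ne_zero _ hi
  obtain ⟨m, S, hm, hS⟩ := exists_congruent_fromBlocks hA (f := ![i])
    (Function.injective_of_subsingleton _) (hsub ▸ isUnit_one)
  rw [hsub] at hS
  exact ⟨m, S, hm, (isSymm_fromBlocks_iff.mp (hS.symm.isSymm hA)).2.2.2, hS⟩

theorem exists_congruent_hyperbolicSum (n : ℕ) (A : Matrix (Fin n) (Fin n) (ZMod 2))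
    (hA : A.IsSymm) (hA₀ : ∀ i, A i i = 0) :
    ∃ r ≤ n, Even r ∧ Congruent A (hyperbolicSum n r) := by
  induction n using Nat.strong_induction_on with
  | _ n ih =>
    by_cases hne : A = 0
    · refine ⟨0, n.zero_le, Even.zero, ?_⟩
      have hzero : hyperbolicSum n 0 = 0 := by ext; simp [hyperbolicSum]
      rw [hne, hzero]
      exact Congruent.refl 0
    · obtain ⟨m, S, rfl, hS, hS₀, hAS⟩ := exists_congruent_hyperbolicPlane hA hA₀ hne
      obtain ⟨r, hr, he, hSr⟩ := ih m (by omega) S hS hS₀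
      exact ⟨2 + r, by omega, even_two.add he,
        hAS.trans (((Congruent.refl _).fromBlocks hSr).trans (congruent_hyperbolicSum_add m r))⟩

theorem exists_congruent_partialIdentity (n : ℕ) (A : Matrix (Fin n) (Fin n) (ZMod 2))
    (hA : A.IsSymm) (hA₁ : ∃ i, A i i ≠ 0) :
    ∃ r ≤ n, Congruent A (partialIdentity n r) := by
  induction n using Nat.strong_induction_on with
  | _ n ih =>
    obtain ⟨m, S, rfl, hS, hAS⟩ := exists_congruent_one hA hA₁
    suffices h : ∃ r ≤ 1 + m, Congruent (fromBlocks (1 : Matrix (Fin 1) (Fin 1) (ZMod 2)) 0 0 S)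
        (partialIdentity (1 + m) r) by
      obtain ⟨r, hr, h⟩ := h
      exact ⟨r, hr, hAS.trans h⟩
    by_cases hS₀ : ∃ i, S i i ≠ 0
    · obtain ⟨r, hr, hSr⟩ := ih m (by omega) S hS hS₀
      exact ⟨1 + r, by omega,
        ((Congruent.refl _).fromBlocks hSr).trans (congruent_partialIdentity_add 1 m r)⟩
    push Not at hS₀
    by_cases hne : S = 0
    · have hzero : partialIdentity m 0 = 0 := by ext; simp [partialIdentity]
      refine ⟨1 + 0, by omega, ?_⟩
      rw [hne, ← hzero]
      exact congruent_partialIdentity_add 1 m 0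
    · obtain ⟨m, T, rfl, hT, -, hST⟩ := exists_congruent_hyperbolicPlane hS hS₀ hne
      let U := fromBlocks (1 : Matrix (Fin 1) (Fin 1) (ZMod 2)) 0 0 T
      have hU : U.IsSymm := IsSymm.fromBlocks isSymm_one (by simp) hT
      obtain ⟨r, hr, hUr⟩ := ih (1 + m) (by omega)
        (U.submatrix finSumFinEquiv.symm finSumFinEquiv.symm) (hU.submatrix _)
        ⟨finSumFinEquiv (Sum.inl 0), by simp [U]⟩
      have hswap : Congruent (fromBlocks (1 : Matrix (Fin 1) (Fin 1) (ZMod 2)) 0 0 S)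
          (fromBlocks (1 : Matrix (Fin 2) (Fin 2) (ZMod 2)) 0 0 U) :=
        ((Congruent.refl _).fromBlocks hST).trans <|
          (congruent_fromBlocks_assoc _ _ _).trans <|
          (congruent_one_hyperbolicPlane.fromBlocks (Congruent.refl T)).trans
          (congruent_fromBlocks_assoc _ _ _).symm
      have hfin := hswap.trans <| ((Congruent.refl _).fromBlocks
        ((congruent_submatrix U finSumFinEquiv.symm).trans hUr)).trans
        (congruent_partialIdentity_add 2 (1 + m) r)
      have hdim : 2 + (1 + m) = 1 + (2 + m) := by omega
      exact ⟨2 + r, by omega, hdim ▸ hfin⟩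

theorem Congruent.exists_isUnit {n R : Type*} [Fintype n] [DecidableEq n] [CommRing R]
    {A B : Matrix n n R} (h : Congruent A B) : ∃ P : Matrix n n R, IsUnit P ∧ A = P * B * Pᵀ := by
  obtain ⟨P, Q, hPQ, -, hA⟩ := h
  exact ⟨P, IsUnit.of_mul_eq_one Q hPQ, hA⟩

theorem congruent_hyperbolicSum_rank {n : ℕ} {A : Matrix (Fin n) (Fin n) (ZMod 2)}
    (hA : A.IsSymm) (hA₀ : ∀ i, A i i = 0) :
    Even A.rank ∧ Congruent A (hyperbolicSum n A.rank) := by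
  obtain ⟨r, hr, he, h⟩ := exists_congruent_hyperbolicSum n A hA hA₀
  rw [h.rank_eq, rank_hyperbolicSum hr he]
  exact ⟨he, h⟩

theorem congruent_partialIdentity_rank {n : ℕ} {A : Matrix (Fin n) (Fin n) (ZMod 2)}
    (hA : A.IsSymm) (hA₁ : ∃ i, A i i ≠ 0) : Congruent A (partialIdentity n A.rank) := by
  obtain ⟨r, hr, h⟩ := exists_congruent_partialIdentity n A hA hA₁
  rwa [h.rank_eq, rank_partialIdentity hr]

end Matrix

/-- A symmetric matrix over `ℤ₂` is determined up to congruence by its rank and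
whether it has a non-zero diagonal entry: if the diagonal vanishes, the rank is
even and `A` is congruent to `rank(A)/2` copies of `[[0,1],[1,0]]` plus a zero
block; otherwise `A` is congruent to `I_r ⊕ 0` with `r = rank(A)`. Moreover two
symmetric matrices with the same rank and the same diagonal invariant are
congruent. -/
theorem stmt_11 (n : ℕ) :
    (∀ A : Matrix (Fin n) (Fin n) (ZMod 2), A.IsSymm → (∀ i, A i i = 0) →
      Even A.rank ∧
      ∃ P : Matrix (Fin n) (Fin n) (ZMod 2), IsUnit P ∧
        P * A * Pᵀ = Matrix.of (fun i j : Fin n =>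
          if i.val < A.rank ∧ j.val < A.rank ∧ i.val / 2 = j.val / 2 ∧ i ≠ j
          then 1 else 0)) ∧
    (∀ A : Matrix (Fin n) (Fin n) (ZMod 2), A.IsSymm → (∃ i, A i i ≠ 0) →
      ∃ P : Matrix (Fin n) (Fin n) (ZMod 2), IsUnit P ∧
        P * A * Pᵀ = Matrix.of (fun i j : Fin n =>
          if i = j ∧ i.val < A.rank then 1 else 0)) ∧
    (∀ A B : Matrix (Fin n) (Fin n) (ZMod 2), A.IsSymm → B.IsSymm →
      A.rank = B.rank → ((∃ i, A i i ≠ 0) ↔ (∃ i, B i i ≠ 0)) →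
      ∃ P : Matrix (Fin n) (Fin n) (ZMod 2), IsUnit P ∧ A = P * B * Pᵀ) := by
  refine ⟨fun A hA hA₀ => ?_, fun A hA hA₁ => ?_, fun A B hA hB hr hd => ?_⟩
  · obtain ⟨he, h⟩ := congruent_hyperbolicSum_rank hA hA₀
    obtain ⟨P, hP, hPA⟩ := h.symm.exists_isUnit
    exact ⟨he, P, hP, hPA.symm⟩
  · obtain ⟨P, hP, hPA⟩ := (congruent_partialIdentity_rank hA hA₁).symm.exists_isUnit
    exact ⟨P, hP, hPA.symm⟩
  · refine Congruent.exists_isUnit ?_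
    by_cases hA₁ : ∃ i, A i i ≠ 0
    · have hB' := congruent_partialIdentity_rank hB (hd.mp hA₁)
      rw [← hr] at hB'
      exact (congruent_partialIdentity_rank hA hA₁).trans hB'.symm
    · have hB₁ := mt hd.mpr hA₁
      push Not at hA₁ hB₁
      have hB' := (congruent_hyperbolicSum_rank hB hB₁).2
      rw [← hr] at hB'
      exact (congruent_hyperbolicSum_rank hA hA₁).2.trans hB'.symm
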